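/- Let B ⊆ A be an inclusion of simple unital C*-algebras with common unit admitting a finite-index conditional expectation E : A → B, and let C := C*(B ∪ C_A(B)). Then every u ∈ N_A(B) satisfies u C_A(B) u* = C_A(B) and u C u* = C (so N_A(B) ⊆ N_A(C_A(B)) ∩ N_A(C)); moreover, for every w ∈ N_A(B) with w ∉ U(B)·U(C_A(B)), the automorphism Ad(w)|_C of C is free and E(w) = 0. In particular, for u, v ∈ N_A(B) with v u* ∉ U(B)·U(C_A(B)), one has E(v u*) = 0 = E(v* u). -/

import Mathlib

/-!
An element `y` with `y x = w x w* y` for all `x ∈ B` is the same thing as an element with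
`w* y ∈ C_A(B)`, and `E` preserves this property because `w` normalizes `B`. So for `c ∈ C_A(B)`
the element `b = E (w c)` of `B` satisfies `w* b ∈ C_A(B)`. Then `b* b = (w* b)* (w* b)` and
`b b* = w (w* b) (w* b)* w*` lie in `B ∩ C_A(B)`, which consists of scalars. If `b ≠ 0`, then
`v = b / ‖b‖` is a unitary of `B`, `v* w` commutes with `B`, and `w = v (v* w)` belongs to
`U(B) U(C_A(B))`. Outside that set, therefore, `E` vanishes on `w C_A(B)`; as the products
`b c` with `b ∈ B`, `c ∈ C_A(B)` span a dense subspace of `C` and `w b = (w b w*) w`, it vanishes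
on all of `w C`.

If `a ∈ C` satisfies `a x = w x w* a` for `x ∈ C`, then `w* a ∈ C_A(B)`, so `a a* = w (w* a) a*`
lies in `w C` and `E (a a*) = 0`. Faithfulness of `E` gives `a = 0`; it follows from finite index,
since the Kadison–Schwarz inequality kills every coefficient `E (a λ_i)` of `a`.
-/

namespace RegularInclusion

variable {A : Type*} [NormedRing A] [StarRing A] [CStarRing A] [CompleteSpace A]
  [NormedAlgebra ℂ A] [StarModule ℂ A]

/-- A conditional expectation of `A` onto the subset `B`: a `ℂ`-linear positive
`B`-bimodular projection of `A` onto `B`. -/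
def IsCondExp (B : Set A) (E : A →ₗ[ℂ] A) : Prop :=
  (∀ x, E x ∈ B) ∧ (∀ b ∈ B, E b = b) ∧
  (∀ x, ∃ y, E (star x * x) = star y * y) ∧
  (∀ b₁ ∈ B, ∀ b₂ ∈ B, ∀ x, E (b₁ * x * b₂) = b₁ * E x * b₂)

/-- `l` is a right quasi-basis for `E`, witnessing finite index. -/
def IsRightQB (E : A →ₗ[ℂ] A) {n : ℕ} (l : Fin n → A) : Prop :=
  ∀ x, x = ∑ i, E (x * l i) * star (l i)

/-- The centralizer (relative commutant) `C_A(B)` of `B` in `A`. -/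
def cent (B : Set A) : Set A := {x | ∀ b ∈ B, x * b = b * x}

/-- The normalizer `N_A(B) = {u ∈ U(A) : uBu* = B}` of `B` in `A`. -/
def normalizer (B : Set A) : Set A :=
  {u | u ∈ unitary A ∧ (fun x => u * x * star u) '' B = B}

/-- The set `U(B)` of unitaries of `B`. -/
def UB (B : Set A) : Set A := {b | b ∈ B ∧ b ∈ unitary A}

/-- The set `U(B)·U(C_A(B))` of products of a unitary of `B` and a unitary of
the centralizer of `B`. -/
def UBC (B : Set A) : Set A :=
  {x | ∃ b c, b ∈ B ∧ b ∈ unitary A ∧ c ∈ cent B ∧ c ∈ unitary A ∧ x = b * c}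

/-- Simplicity of the C*-algebra (given as the subset `S` of `A`): the only closed
two-sided ideals of `S` are `{0}` and `S`. -/
def IsSimpleCStar (S : Set A) : Prop :=
  ∀ I : Set A, I ⊆ S → IsClosed I → (0 : A) ∈ I →
    (∀ x ∈ I, ∀ y ∈ I, x + y ∈ I) →
    (∀ x ∈ I, ∀ b ∈ S, x * b ∈ I ∧ b * x ∈ I) →
    I = {0} ∨ I = S

/-- The intermediate C*-subalgebra `C := C*(B ∪ C_A(B))` generated by `B` and the
centralizer of `B`. -/
def genC (B : Set A) : StarSubalgebra ℂ A :=
  (StarAlgebra.adjoin ℂ (B ∪ cent B)).topologicalClosure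

/-- Regularity of the inclusion `B ⊆ A`: the normalizer of `B` generates `A` as a
C*-algebra. -/
def IsRegular (B : Set A) : Prop :=
  (StarAlgebra.adjoin ℂ (normalizer B)).topologicalClosure = ⊤

/-- `E₀` is the minimal conditional expectation of `A` onto `B`: the finite-index
conditional expectation whose (scalar) Watatani index is least among all finite-index
conditional expectations onto `B`. -/
def IsMinimalCondExp (B : Set A) (E₀ : A →ₗ[ℂ] A) : Prop :=
  IsCondExp B E₀ ∧
  ∃ (r₀ : ℝ) (n : ℕ) (l : Fin n → A), IsRightQB E₀ l ∧
    (∑ i, l i * star (l i)) = (r₀ : ℂ) • 1 ∧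
    ∀ E : A →ₗ[ℂ] A, IsCondExp B E → ∀ (m : ℕ) (μ : Fin m → A), IsRightQB E μ →
      ∀ r : ℝ, (∑ i, μ i * star (μ i)) = (r : ℂ) • 1 → r₀ ≤ r

section Algebra

open scoped Pointwise

lemma image_centralizer {M N : Type*} [Mul M] [Mul N] (e : M ≃* N) (S : Set M) :
    e '' S.centralizer = (e '' S).centralizer := by
  ext y
  obtain ⟨x, rfl⟩ := e.surjective y
  simp only [e.injective.mem_set_image, Set.mem_centralizer_iff, Set.forall_mem_image, ← map_mul,
    e.injective.eq_iff]

lemma coe_closure_union_centralizer {M : Type*} [Monoid M] (S : Submonoid M) :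
    (Submonoid.closure ((S : Set M) ∪ Set.centralizer S) : Set M) =
      (S : Set M) * Set.centralizer (S : Set M) := by
  refine Set.Subset.antisymm (fun x hx => ?_) ?_
  · induction hx using Submonoid.closure_induction_left with
    | one => exact ⟨1, S.one_mem, 1, Set.one_mem_centralizer, mul_one 1⟩
    | mul_left g hg y _ hy =>
      obtain ⟨b, hb, c, hc, rfl⟩ := hy
      rcases hg with hg | hg
      · exact ⟨g * b, mul_mem hg hb, c, hc, mul_assoc g b c⟩
      · exact ⟨b, hb, g * c, Set.mul_mem_centralizer hg hc, by
          simp only [← mul_assoc, hg b hb]⟩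
  · rintro _ ⟨b, hb, c, hc, rfl⟩
    exact mul_mem (Submonoid.subset_closure (.inl hb)) (Submonoid.subset_closure (.inr hc))

variable {R : Type*} [NormedRing R]

lemma cent_eq_centralizer (S : Set R) : cent S = S.centralizer :=
  Set.ext fun _ => forall₂_congr fun _ _ => eq_comm

lemma image_cent {R' : Type*} [NormedRing R'] (e : R ≃* R') (S : Set R) :
    e '' cent S = cent (e '' S) := by
  simp only [cent_eq_centralizer, image_centralizer]

lemma mul_mem_cent {S : Set R} {c d : R} (hc : c ∈ cent S) (hd : d ∈ cent S) :
    c * d ∈ cent S := by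
  rw [cent_eq_centralizer] at *
  exact Set.mul_mem_centralizer hc hd

variable [StarRing R]

lemma star_mem_cent {σ : Type*} [SetLike σ R] [StarMemClass σ R] {B : σ} {c : R}
    (hc : c ∈ cent (B : Set R)) : star c ∈ cent (B : Set R) := by
  rw [cent_eq_centralizer] at *
  exact Set.star_mem_centralizer' (fun _ => star_mem) hc

variable {S : Set R} {u v w : R}

lemma conj_mem_of_image_conj_eq (h : (fun x => u * x * star u) '' S = S) {x : R} (hx : x ∈ S) :
    u * x * star u ∈ S := by
  rw [← h]
  exact Set.mem_image_of_mem _ hx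

lemma star_mem_normalizer (hu : u ∈ normalizer S) : star u ∈ normalizer S := by
  refine ⟨Unitary.star_mem hu.1, ?_⟩
  conv_lhs => rw [← hu.2, Set.image_image]
  have conj_star_conj (x : R) : star u * (u * x * star u) * star (star u) = x := by
    simp only [star_star, mul_assoc, Unitary.star_mul_self_of_mem hu.1, mul_one,
      ← mul_assoc (star u) u, one_mul]
  simp only [conj_star_conj, Set.image_id']

lemma mul_mem_normalizer (hu : u ∈ normalizer S) (hv : v ∈ normalizer S) :
    u * v ∈ normalizer S := by
  refine ⟨mul_mem hu.1 hv.1, ?_⟩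
  conv_rhs => rw [← hu.2, ← hv.2, Set.image_image]
  simp only [star_mul, mul_assoc]

lemma image_conj_cent (hu : u ∈ normalizer S) : (fun x => u * x * star u) '' cent S = cent S := by
  let Ad : R ≃* R := (Unitary.conjStarAlgAut ℤ R ⟨u, hu.1⟩ : R ≃* R)
  have hS : Ad '' S = S := hu.2
  exact (image_cent Ad S).trans (congrArg cent hS)

lemma star_mul_mem_cent_iff (hw : w ∈ unitary R) {a : R} :
    star w * a ∈ cent S ↔ ∀ x ∈ S, a * x = w * x * star w * a := by
  refine forall₂_congr fun x _ => ?_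
  rw [mul_assoc, ← (Unitary.isUnit_coe (U := ⟨w, hw⟩)).mul_right_inj]
  simp only [← mul_assoc, Unitary.mul_star_self_of_mem hw, one_mul]

lemma conj_mem_unitary (hw : w ∈ unitary R) (hu : u ∈ unitary R) : w * u * star w ∈ unitary R :=
  mul_mem (mul_mem hw hu) (Unitary.star_mem hw)

lemma conj_mem_UBC (hw : w ∈ normalizer S) {x : R} (hx : x ∈ UBC S) :
    w * x * star w ∈ UBC S := by
  obtain ⟨b, c, hb, hbu, hc, hcu, rfl⟩ := hx
  refine ⟨w * b * star w, w * c * star w, conj_mem_of_image_conj_eq hw.2 hb,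
    conj_mem_unitary hw.1 hbu, conj_mem_of_image_conj_eq (image_conj_cent hw) hc,
    conj_mem_unitary hw.1 hcu, ?_⟩
  exact map_mul (Unitary.conjStarAlgAut ℤ R ⟨w, hw.1⟩) b c

variable {σ : Type*} [SetLike σ R] [StarMemClass σ R] {B : σ}

lemma star_mem_UBC {x : R} (hx : x ∈ UBC (B : Set R)) : star x ∈ UBC (B : Set R) := by
  obtain ⟨b, c, hb, hbu, hc, hcu, rfl⟩ := hx
  refine ⟨star b, star c, star_mem hb, Unitary.star_mem hbu, star_mem_cent hc,
    Unitary.star_mem hcu, ?_⟩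
  rw [star_mul, star_mem_cent hc _ (star_mem hb)]

lemma mul_star_mem_UBC_of_star_mul_mem (hv : v ∈ normalizer (B : Set R))
    (h : star v * u ∈ UBC (B : Set R)) : v * star u ∈ UBC (B : Set R) := by
  have hconj := conj_mem_UBC hv (star_mem_UBC h)
  rwa [star_mul, star_star, ← mul_assoc, mul_assoc, Unitary.mul_star_self_of_mem hv.1,
    mul_one] at hconj

end Algebra

section Center

variable {R : Type*} [NormedRing R] [CompleteSpace R]

lemma isUnit_of_isSimpleCStar {σ : Type*} [SetLike σ R] [SubringClass σ R] {S : σ}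
    (hclosed : IsClosed (S : Set R)) (hsimple : IsSimpleCStar (S : Set R)) {y : R} (hy : y ∈ S)
    (hyc : y ∈ cent (S : Set R)) (hy0 : y ≠ 0) : IsUnit y := by
  let J : AddSubgroup R := (AddSubgroup.ofClass S).map (AddMonoidHom.mulLeft y)
  have hyJ : y ∈ J := ⟨1, one_mem S, mul_one y⟩
  have hJS : (J : Set R) ⊆ S := by
    rintro _ ⟨b, hb, rfl⟩
    exact mul_mem hy hb
  have hideal : ∀ p ∈ J.topologicalClosure, ∀ b ∈ S,
      p * b ∈ J.topologicalClosure ∧ b * p ∈ J.topologicalClosure := by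
    intro p hp b hb
    constructor
    · refine map_mem_closure (f := fun x => x * b) (by fun_prop) hp ?_
      rintro _ ⟨c, hc, rfl⟩
      exact ⟨c * b, mul_mem (s := S) hc hb, (mul_assoc y c b).symm⟩
    · refine map_mem_closure (f := fun x => b * x) (by fun_prop) hp ?_
      rintro _ ⟨c, hc, rfl⟩
      refine ⟨b * c, mul_mem (s := S) hb hc, ?_⟩
      simp only [AddMonoidHom.coe_mulLeft, ← mul_assoc, hyc b hb]
  rcases hsimple J.topologicalClosure (closure_minimal hJS hclosed)
    J.isClosed_topologicalClosure (zero_mem _) (fun _ hp _ => add_mem hp) hideal with h | h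
  · have hyJ' : y ∈ (J.topologicalClosure : Set R) := J.le_topologicalClosure hyJ
    rw [h] at hyJ'
    exact absurd hyJ' hy0
  -- Invertible elements form an open set containing `1 ∈ closure (y S)`: some `y b` is invertible.
  · have h1 : (1 : R) ∈ (J.topologicalClosure : Set R) := h ▸ one_mem S
    obtain ⟨_, hunit, b, hb, rfl⟩ := mem_closure_iff.mp h1 {x | IsUnit x} Units.isOpen isUnit_one
    exact ((Commute.isUnit_mul_iff (hyc b hb)).mp hunit).1

lemma isCentral_of_isSimpleCStar [NormedAlgebra ℂ R] {B : Subalgebra ℂ R}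
    (hclosed : IsClosed (B : Set R)) (hsimple : IsSimpleCStar (B : Set R)) :
    Algebra.IsCentral ℂ B where
  out := by
    rintro ⟨z, hz⟩ hcentral
    rw [Subalgebra.mem_center_iff] at hcentral
    rcases subsingleton_or_nontrivial R with _ | _
    · exact ⟨0, Subsingleton.elim _ _⟩
    obtain ⟨r, hr⟩ := spectrum.nonempty z
    refine ⟨r, Subtype.ext ?_⟩
    by_contra hne
    refine hr (isUnit_of_isSimpleCStar hclosed hsimple (sub_mem (B.algebraMap_mem r) hz)
      (fun b hb => ?_) (sub_ne_zero.mpr hne))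
    have hzb : b * z = z * b := congrArg Subtype.val (hcentral ⟨b, hb⟩)
    rw [sub_mul, mul_sub, hzb, Algebra.commutes]

end Center

variable {D : Type*} [CStarAlgebra D]

section GeneratedSubalgebra

open scoped Pointwise

lemma image_genC {D' : Type*} [CStarAlgebra D'] (φ : D ≃⋆ₐ[ℂ] D') (S : Set D) :
    φ '' genC S = genC (φ '' S) := by
  have hadjoin : φ '' StarAlgebra.adjoin ℂ (S ∪ cent S) =
      StarAlgebra.adjoin ℂ (φ '' (S ∪ cent S)) :=
    congrArg SetLike.coe (StarAlgHom.map_adjoin (φ : D →⋆ₐ[ℂ] D') (S ∪ cent S))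
  have hcent : φ '' cent S = cent (φ '' S) := image_cent (φ : D ≃* D') S
  calc φ '' genC S = closure (φ '' StarAlgebra.adjoin ℂ (S ∪ cent S)) :=
      ((StarAlgEquiv.isometry φ).isClosedEmbedding.closure_image_eq _).symm
    _ = closure (StarAlgebra.adjoin ℂ (φ '' (S ∪ cent S))) := by rw [hadjoin]
    _ = genC (φ '' S) := by rw [Set.image_union, hcent]; rfl

lemma image_conj_genC {S : Set D} {u : D} (hu : u ∈ normalizer S) :
    (fun x => u * x * star u) '' genC S = genC S := by
  let Ad := Unitary.conjStarAlgAut ℂ D ⟨u, hu.1⟩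
  have hS : Ad '' S = S := hu.2
  exact (image_genC Ad S).trans (by rw [hS])

lemma subset_genC (S : Set D) : S ⊆ genC S := fun _ hx =>
  StarSubalgebra.le_topologicalClosure _ (StarAlgebra.subset_adjoin ℂ _ (.inl hx))

lemma cent_subset_genC (S : Set D) : cent S ⊆ genC S := fun _ hx =>
  StarSubalgebra.le_topologicalClosure _ (StarAlgebra.subset_adjoin ℂ _ (.inr hx))

lemma coe_genC (B : StarSubalgebra ℂ D) :
    (genC (B : Set D) : Set D) =
      closure (Submodule.span ℂ ((B : Set D) * cent (B : Set D)) : Set D) := by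
  have hstar : star ((B : Set D) ∪ cent (B : Set D)) ⊆ B ∪ cent (B : Set D) := by
    rintro x (hx | hx)
    · exact .inl (star_mem_iff.mp hx)
    · exact .inr (by simpa using star_mem_cent hx)
  have hmonoid : (Submonoid.closure ((B : Set D) ∪ cent (B : Set D)) : Set D) =
      (B : Set D) * cent (B : Set D) := by
    rw [cent_eq_centralizer]
    exact coe_closure_union_centralizer B.toSubmonoid
  have hspan := StarAlgebra.adjoin_eq_span (R := ℂ) ((B : Set D) ∪ cent (B : Set D))
  rw [Set.union_eq_left.mpr hstar, hmonoid] at hspan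
  exact congrArg (fun V : Submodule ℂ D => closure (V : Set D)) hspan

end GeneratedSubalgebra

section ScalarModulus

lemma star_mul_self_eq_algebraMap_norm_sq {b : D} (h : star b * b ∈ (⊥ : Subalgebra ℂ D)) :
    star b * b = algebraMap ℂ D ((‖b‖ : ℂ) ^ 2) := by
  let := CStarAlgebra.spectralOrder D
  have := CStarAlgebra.spectralOrderedRing D
  rcases subsingleton_or_nontrivial D with _ | _
  · exact Subsingleton.elim _ _
  obtain ⟨r, hr⟩ := Algebra.mem_bot.mp h
  have hmem : ((‖star b * b‖ : ℝ) : ℂ) ∈ spectrum ℂ (star b * b) :=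
    spectrum.algebraMap_mem ℂ
      (CStarAlgebra.norm_mem_spectrum_of_nonneg (star_mul_self_nonneg b))
  rw [← hr, spectrum.scalar_eq, Set.mem_singleton_iff, hr, CStarRing.norm_star_mul_self] at hmem
  rw [← hr, ← hmem, Complex.ofReal_mul, sq]

lemma norm_inv_smul_mem_unitary {b : D} (hb : b ≠ 0) (h : star b * b ∈ (⊥ : Subalgebra ℂ D))
    (h' : b * star b ∈ (⊥ : Subalgebra ℂ D)) : (‖b‖ : ℂ)⁻¹ • b ∈ unitary D := by
  have hleft := star_mul_self_eq_algebraMap_norm_sq h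
  have hright := star_mul_self_eq_algebraMap_norm_sq (b := star b) (by rwa [star_star])
  rw [star_star, norm_star] at hright
  have hnorm : (‖b‖ : ℂ)⁻¹ * (‖b‖ : ℂ)⁻¹ * (‖b‖ : ℂ) ^ 2 = 1 := by
    have := Complex.ofReal_ne_zero.mpr (norm_ne_zero_iff.mpr hb)
    field_simp
  have hscale (x : D) (hx : x = algebraMap ℂ D ((‖b‖ : ℂ) ^ 2)) :
      ((‖b‖ : ℂ)⁻¹ * (‖b‖ : ℂ)⁻¹) • x = 1 := by
    rw [hx, Algebra.algebraMap_eq_smul_one, smul_smul, hnorm, one_smul]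
  simp only [Unitary.mem_iff, star_smul, star_inv₀, RCLike.star_def, Complex.conj_ofReal,
    smul_mul_smul_comm]
  exact ⟨hscale _ hleft, hscale _ hright⟩

variable {B : StarSubalgebra ℂ D} [Algebra.IsCentral ℂ B]

lemma mem_bot_of_mem_cent {z : D} (hz : z ∈ B) (hzc : z ∈ cent (B : Set D)) :
    z ∈ (⊥ : Subalgebra ℂ D) := by
  have hcenter : (⟨z, hz⟩ : B) ∈ Subalgebra.center ℂ B :=
    Subalgebra.mem_center_iff.mpr fun b => Subtype.ext (hzc b b.2).symm
  obtain ⟨r, hr⟩ := Algebra.IsCentral.out hcenter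
  exact ⟨r, congrArg Subtype.val hr⟩

lemma mem_UBC_of_star_mul_mem_cent {w b : D} (hw : w ∈ normalizer (B : Set D)) (hb : b ∈ B)
    (hb0 : b ≠ 0) (h : star w * b ∈ cent (B : Set D)) : w ∈ UBC (B : Set D) := by
  have hww := Unitary.mul_star_self_of_mem hw.1
  have hleft : star b * b ∈ cent (B : Set D) := by
    have := mul_mem_cent (star_mem_cent h) h
    rwa [star_mul, star_star, mul_assoc, ← mul_assoc w, hww, one_mul] at this
  have hright : b * star b ∈ cent (B : Set D) := by
    have := conj_mem_of_image_conj_eq (image_conj_cent hw) (mul_mem_cent h (star_mem_cent h))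
    simp only [star_mul, star_star, mul_assoc, hww, mul_one] at this
    rwa [← mul_assoc, hww, one_mul] at this
  set v := (‖b‖ : ℂ)⁻¹ • b with hv
  have hvu : v ∈ unitary D := norm_inv_smul_mem_unitary hb0
    (mem_bot_of_mem_cent (mul_mem (star_mem hb) hb) hleft)
    (mem_bot_of_mem_cent (mul_mem hb (star_mem hb)) hright)
  have hvw : star v * w ∈ cent (B : Set D) := by
    have hwv : star w * v ∈ cent (B : Set D) := fun x hx => by
      rw [hv, mul_smul_comm, smul_mul_assoc, h x hx, mul_smul_comm]
    simpa using star_mem_cent hwv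
  refine ⟨v, star v * w, B.smul_mem hb _, hvu, hvw, mul_mem (Unitary.star_mem hvu) hw.1, ?_⟩
  rw [← mul_assoc, Unitary.mul_star_self_of_mem hvu, one_mul]

end ScalarModulus

section Expectation

variable {B : StarSubalgebra ℂ D} {E : D →ₗ[ℂ] D}

lemma IsCondExp.map_mul_left (hE : IsCondExp (B : Set D) E) {b : D} (hb : b ∈ B) (x : D) :
    E (b * x) = b * E x := by
  simpa using hE.2.2.2 b hb 1 B.one_mem x

lemma IsCondExp.map_mul_right (hE : IsCondExp (B : Set D) E) {b : D} (hb : b ∈ B) (x : D) :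
    E (x * b) = E x * b := by
  simpa using hE.2.2.2 1 B.one_mem b hb x

section Order

variable [PartialOrder D] [StarOrderedRing D]

/-- A conditional expectation as a positive linear map for the order of the C⋆-algebra; positive
linear maps are automatically continuous and preserve `star`. -/
noncomputable def IsCondExp.toPositiveLinearMap {S : Set D} (hE : IsCondExp S E) : D →ₚ[ℂ] D :=
  PositiveLinearMap.mk₀ E fun x hx => by
    obtain ⟨y, rfl⟩ := CStarAlgebra.nonneg_iff_eq_star_mul_self.mp hx
    obtain ⟨z, hz⟩ := hE.2.2.1 y
    exact hz ▸ star_mul_self_nonneg z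

lemma IsCondExp.map_mul_star_map_le (hE : IsCondExp (B : Set D) E) (y : D) :
    E y * star (E y) ≤ E (y * star y) := by
  have hstar : E (star y) = star (E y) := map_star hE.toPositiveLinearMap y
  have hEy : E y ∈ B := hE.1 y
  have hvariance : E ((y - E y) * star (y - E y)) = E (y * star y) - E y * star (E y) := by
    rw [star_sub, sub_mul, mul_sub, mul_sub, map_sub, map_sub, map_sub, hE.map_mul_left hEy,
      hE.map_mul_left hEy, hE.map_mul_right (star_mem hEy), hE.2.1 _ (star_mem hEy), hstar,
      sub_self, sub_zero]
  rw [← sub_nonneg, ← hvariance]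
  exact map_nonneg hE.toPositiveLinearMap (mul_star_self_nonneg _)

end Order

lemma IsCondExp.continuous {S : Set D} (hE : IsCondExp S E) : Continuous E := by
  let := CStarAlgebra.spectralOrder D
  have := CStarAlgebra.spectralOrderedRing D
  exact map_continuous hE.toPositiveLinearMap

lemma IsCondExp.map_mul_eq_zero (hE : IsCondExp (B : Set D) E) {x : D} (hx : E (x * star x) = 0)
    (y : D) : E (x * y) = 0 := by
  let := CStarAlgebra.spectralOrder D
  have := CStarAlgebra.spectralOrderedRing D
  have hle : E (x * y) * star (E (x * y)) ≤ 0 :=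
    calc E (x * y) * star (E (x * y)) ≤ E (x * y * star (x * y)) := hE.map_mul_star_map_le _
      _ = E (x * (y * star y) * star x) := by simp only [star_mul, mul_assoc]
      _ ≤ E ((‖y * star y‖ : ℂ) • (x * star x)) := by
        rw [Complex.coe_smul]
        exact hE.toPositiveLinearMap.monotone' (CStarAlgebra.star_right_conjugate_le_norm_smul)
      _ = 0 := by rw [map_smul, hx, smul_zero]
  exact (CStarRing.mul_star_self_eq_zero_iff _).mp (hle.antisymm (mul_star_self_nonneg _))

lemma IsRightQB.eq_zero_of_map_mul_star_self_eq_zero {n : ℕ} {l : Fin n → D}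
    (hl : IsRightQB E l) (hE : IsCondExp (B : Set D) E) {x : D} (hx : E (x * star x) = 0) :
    x = 0 := by
  rw [hl x]
  exact Finset.sum_eq_zero fun i _ => by rw [hE.map_mul_eq_zero hx, zero_mul]

variable {w : D}

lemma IsCondExp.star_mul_map_mem_cent (hE : IsCondExp (B : Set D) E)
    (hw : w ∈ normalizer (B : Set D)) {y : D} (hy : star w * y ∈ cent (B : Set D)) :
    star w * E y ∈ cent (B : Set D) := by
  rw [star_mul_mem_cent_iff hw.1] at *
  intro x hx
  rw [← hE.map_mul_right hx, hy x hx, hE.map_mul_left (conj_mem_of_image_conj_eq hw.2 hx)]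

variable [Algebra.IsCentral ℂ B]

lemma IsCondExp.map_mul_cent_eq_zero (hE : IsCondExp (B : Set D) E)
    (hw : w ∈ normalizer (B : Set D)) (hwn : w ∉ UBC (B : Set D)) {c : D}
    (hc : c ∈ cent (B : Set D)) : E (w * c) = 0 := by
  have hwc : star w * (w * c) ∈ cent (B : Set D) := by
    rwa [← mul_assoc, Unitary.star_mul_self_of_mem hw.1, one_mul]
  by_contra hne
  exact hwn (mem_UBC_of_star_mul_mem_cent hw (hE.1 _) hne (hE.star_mul_map_mem_cent hw hwc))

open scoped Pointwise in
lemma IsCondExp.map_mul_genC_eq_zero (hE : IsCondExp (B : Set D) E)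
    (hw : w ∈ normalizer (B : Set D)) (hwn : w ∉ UBC (B : Set D)) {z : D}
    (hz : z ∈ genC (B : Set D)) : E (w * z) = 0 := by
  have hprod : (B : Set D) * cent (B : Set D) ⊆ (E ∘ₗ LinearMap.mulLeft ℂ w).ker := by
    rintro _ ⟨b, hb, c, hc, rfl⟩
    calc E (w * (b * c)) = E (w * b * star w * (w * c)) := by
          simp only [mul_assoc, ← mul_assoc (star w) w, Unitary.star_mul_self_of_mem hw.1, one_mul]
      _ = w * b * star w * E (w * c) :=
          hE.map_mul_left (conj_mem_of_image_conj_eq hw.2 hb) _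
      _ = 0 := by rw [hE.map_mul_cent_eq_zero hw hwn hc, mul_zero]
  have hclosed : IsClosed {x | E (w * x) = 0} :=
    isClosed_eq (hE.continuous.comp (continuous_const_mul w)) continuous_const
  rw [← SetLike.mem_coe, coe_genC] at hz
  exact closure_minimal (Submodule.span_le.mpr hprod) hclosed hz

lemma IsCondExp.map_normalizer_eq_zero (hE : IsCondExp (B : Set D) E)
    (hw : w ∈ normalizer (B : Set D)) (hwn : w ∉ UBC (B : Set D)) : E w = 0 := by
  simpa using hE.map_mul_genC_eq_zero hw hwn (one_mem _)

lemma IsCondExp.eq_zero_of_mul_eq_conj_mul (hE : IsCondExp (B : Set D) E)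
    (hfaithful : ∀ x, E (x * star x) = 0 → x = 0) (hw : w ∈ normalizer (B : Set D))
    (hwn : w ∉ UBC (B : Set D)) {a : D} (ha : a ∈ genC (B : Set D))
    (h : ∀ x ∈ (B : Set D), a * x = w * x * star w * a) : a = 0 := by
  have hc : star w * a ∈ genC (B : Set D) :=
    cent_subset_genC _ ((star_mul_mem_cent_iff hw.1).mpr h)
  have hzero := hE.map_mul_genC_eq_zero hw hwn (mul_mem hc (star_mem ha))
  rw [← mul_assoc, ← mul_assoc, Unitary.mul_star_self_of_mem hw.1, one_mul] at hzero
  exact hfaithful a hzero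

end Expectation

theorem normalizer_stabilizes_genC_and_expectation_vanishes_general
    (B : StarSubalgebra ℂ D) [Algebra.IsCentral ℂ B] (E : D →ₗ[ℂ] D)
    (hE : IsCondExp (B : Set D) E) (hfaithful : ∀ x, E (x * star x) = 0 → x = 0) :
    (∀ u ∈ normalizer (B : Set D),
        (fun x => u * x * star u) '' cent (B : Set D) = cent (B : Set D) ∧
        (fun x => u * x * star u) '' (genC (B : Set D) : Set D) = (genC (B : Set D) : Set D)) ∧
    (∀ w ∈ normalizer (B : Set D), w ∉ UBC (B : Set D) →
        (∀ a ∈ (genC (B : Set D) : Set D),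
            (∀ x ∈ (genC (B : Set D) : Set D), a * x = (w * x * star w) * a) → a = 0) ∧
        E w = 0) ∧
    (∀ u ∈ normalizer (B : Set D), ∀ v ∈ normalizer (B : Set D),
        v * star u ∉ UBC (B : Set D) → E (v * star u) = 0 ∧ E (star v * u) = 0) := by
  refine ⟨fun u hu => ⟨image_conj_cent hu, image_conj_genC hu⟩, fun w hw hwn => ⟨?_, ?_⟩,
    fun u hu v hv hvu => ⟨?_, ?_⟩⟩
  · exact fun a ha h => hE.eq_zero_of_mul_eq_conj_mul hfaithful hw hwn ha
      fun x hx => h x (subset_genC _ hx)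
  · exact hE.map_normalizer_eq_zero hw hwn
  · exact hE.map_normalizer_eq_zero (mul_mem_normalizer hv (star_mem_normalizer hu)) hvu
  · exact hE.map_normalizer_eq_zero (mul_mem_normalizer (star_mem_normalizer hv) hu)
      (mt (mul_star_mem_UBC_of_star_mul_mem hv) hvu)

/-- for an inclusion `B ⊆ A` of simple unital C*-algebras with a
finite-index conditional expectation `E` and `C := C*(B ∪ C_A(B))`: every `u ∈ N_A(B)`
normalizes `C_A(B)` and `C`; for `w ∈ N_A(B) \ U(B)·U(C_A(B))` the automorphism
`Ad(w)|_C` is free and `E(w) = 0`; and `E(v u*) = 0 = E(v* u)` for `u, v ∈ N_A(B)` with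
`v u* ∉ U(B)·U(C_A(B))`. -/
theorem normalizer_stabilizes_genC_and_expectation_vanishes
    (B : StarSubalgebra ℂ A) (hBclosed : IsClosed (B : Set A))
    (hAsimple : IsSimpleCStar (Set.univ : Set A))
    (hBsimple : IsSimpleCStar (B : Set A))
    (E : A →ₗ[ℂ] A) (hE : IsCondExp (B : Set A) E)
    (nE : ℕ) (lE : Fin nE → A) (hlE : IsRightQB E lE) :
    (∀ u ∈ normalizer (B : Set A),
        (fun x => u * x * star u) '' cent (B : Set A) = cent (B : Set A) ∧
        (fun x => u * x * star u) '' (genC (B : Set A) : Set A) = (genC (B : Set A) : Set A)) ∧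
    (∀ w ∈ normalizer (B : Set A), w ∉ UBC (B : Set A) →
        (∀ a ∈ (genC (B : Set A) : Set A),
            (∀ x ∈ (genC (B : Set A) : Set A), a * x = (w * x * star w) * a) → a = 0) ∧
        E w = 0) ∧
    (∀ u ∈ normalizer (B : Set A), ∀ v ∈ normalizer (B : Set A),
        v * star u ∉ UBC (B : Set A) → E (v * star u) = 0 ∧ E (star v * u) = 0) := by
  let : CStarAlgebra A := {}
  have : Algebra.IsCentral ℂ B := isCentral_of_isSimpleCStar (B := B.toSubalgebra) hBclosed hBsimple
  exact normalizer_stabilizes_genC_and_expectation_vanishes_general B E hE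
    fun _ => hlE.eq_zero_of_map_mul_star_self_eq_zero hE

end RegularInclusion
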